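/- arXiv:1310.4035 — 5 statements merged into one kernel-verified Lean document; each statement's English description precedes it below -/
import Mathlib

section
/- Every Corson compact space has the Bishop property (B). -/
open Set Topology Filter

/-- `f ≺ g`: `f ≠ g` and `f` agrees with `g` on the support of `f` (the closure of
the set where `f` is nonzero). -/
def Prec {K : Type*} [TopologicalSpace K] (f g : C(K, ℝ)) : Prop :=
  f ≠ g ∧ ∀ t ∈ closure {t | f t ≠ 0}, f t = g t

/-- `f ≺_δ g`: `f ≺ g` and `‖f - g‖ ≥ δ`. -/
def PrecDelta {K : Type*} [TopologicalSpace K] [CompactSpace K] (δ : ℝ) (f g : C(K, ℝ)) : Prop :=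
  Prec f g ∧ δ ≤ ‖f - g‖

/-- `F` is a `δ`-`≺`-chain. -/
def IsPrecChain {K : Type*} [TopologicalSpace K] [CompactSpace K] (δ : ℝ)
    (F : Set C(K, ℝ)) : Prop :=
  ∀ f ∈ F, ∀ g ∈ F, f ≠ g → PrecDelta δ f g ∨ PrecDelta δ g f

/-- A compact Hausdorff space has the Bishop property (B) if for every `δ > 0`
every `δ`-`≺`-chain in `C(K)` is countable. -/
def HasBishop (K : Type*) [TopologicalSpace K] [CompactSpace K] [T2Space K] : Prop :=
  ∀ δ : ℝ, 0 < δ → ∀ F : Set C(K, ℝ), IsPrecChain δ F → F.Countable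

/-!
Two facts about the topology of pointwise convergence on `C(K)` give the theorem.

A `δ`-`≺`-chain has no accumulation point. Every element of the chain is `≺`-comparable with an
accumulation point `h`, so `h` is a limit of chain elements `f ≺ h` or of chain elements `h ≺ f`.
In the first case the closed sets `{f = 0, |h| ≥ δ}`, in the second the closed sets
`{h = 0, |f| ≥ δ}`, are nonempty and totally ordered by inclusion, and a common point contradicts
the convergence to `h` there.

If `K` is Corson, `C(K)` is Lindelöf. Given countably many sets `S` of sequences in `K`, closing off
produces a countable set `A` of coordinates and countable `D ⊆ S` such that setting all coordinates
outside `A` to zero defines a continuous `r : K → K` with `r ∘ x ∈ closure D` for `x ∈ S`. For a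
filter on `C(K)` with countable intersections and no cluster point, apply this to the sets `S_W` of
sequences `x` such that eventually `f ∘ x ∉ W`, where `W` runs through a countable base of `ℕ → ℝ`.
Eventually `f ∘ d ∉ W` for all `W` and all `d ∈ D_W`; fix such an `f = g`. Some neighbourhood
`{f | f ∘ x ∈ W}` of `g ∘ r` is eventually avoided, so `x ∈ S_W`; but `g ∘ (r ∘ x) ∈ W`, and
approximating `r ∘ x` by `d ∈ D_W` gives `g ∘ d ∈ W`.
-/

open TopologicalSpace

section Topology

lemma countable_of_isLindelof_of_forall_not_accPt {X : Type*} [TopologicalSpace X] {s t : Set X}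
    (hs : IsLindelof s) (hts : t ⊆ s) (ht : ∀ x ∈ s, ¬AccPt x (𝓟 t)) : t.Countable := by
  have hclosed : s ∩ closure t = t := by
    rw [closure_eq_self_union_derivedSet, inter_union_distrib_left, inter_eq_right.2 hts,
      union_eq_left]
    exact fun x hx => (ht x hx.1 hx.2).elim
  exact (hclosed ▸ hs.inter_right isClosed_closure : IsLindelof t).countable
    (discreteTopology_of_noAccPts fun x hx => ht x (hts hx))

lemma exists_forall_mem_of_total {X ι : Type*} [TopologicalSpace X] [CompactSpace X]
    [Nonempty ι] {Z : ι → Set X} (hne : ∀ i, (Z i).Nonempty) (hclosed : ∀ i, IsClosed (Z i))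
    (htotal : ∀ i j, Z i ⊆ Z j ∨ Z j ⊆ Z i) : ∃ x, ∀ i, x ∈ Z i := by
  have hdir : Directed (· ⊇ ·) Z := fun i j =>
    (htotal i j).elim (fun h => ⟨i, subset_rfl, h⟩) fun h => ⟨j, h, subset_rfl⟩
  simpa only [Set.Nonempty, mem_iInter] using
    IsCompact.nonempty_iInter_of_directed_nonempty_isCompact_isClosed Z hdir hne
      (fun i => (hclosed i).isCompact) hclosed

lemma exists_countable_subset_image_subset_closure {X Y : Type*} [TopologicalSpace Y]
    [SecondCountableTopology Y] (f : X → Y) (S : Set X) :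
    ∃ D ⊆ S, D.Countable ∧ f '' S ⊆ closure (f '' D) := by
  let _ : TopologicalSpace X := .induced f ‹_›
  have : SecondCountableTopology X := secondCountableTopology_induced X Y f
  obtain ⟨D, hDc, hD⟩ := exists_countable_dense S
  refine ⟨(↑) '' D, Subtype.coe_image_subset S D, hDc.image _, ?_⟩
  have hf : Continuous (f ∘ ((↑) : S → X)) := continuous_induced_dom.comp continuous_subtype_val
  simpa only [range_comp, Subtype.range_coe, image_comp] using
    hf.range_subset_closure_image_dense hD

lemma exists_comp_preimage_subset_of_isOpen {X Y : Type*} [Nonempty X] [TopologicalSpace Y]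
    {V : Set (X → Y)} (hV : IsOpen V) {h : X → Y} (hh : h ∈ V) :
    ∃ (x : ℕ → X) (W : Set (ℕ → Y)), IsOpen W ∧ h ∘ x ∈ W ∧ (· ∘ x) ⁻¹' W ⊆ V := by
  obtain ⟨I, u, hu, hIV⟩ := isOpen_pi_iff.1 hV h hh
  obtain ⟨x, hx⟩ := countable_iff_exists_subset_range.1 I.countable_toSet
  have hindex : ∀ a ∈ I, ∃ k, x k = a := fun a ha => hx ha
  choose! k hk using hindex
  refine ⟨x, {z | ∀ a ∈ I, z (k a) ∈ u a}, ?_, ?_, ?_⟩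
  · simp only [ofPred_forall]
    exact isOpen_biInter_finset fun a ha => (hu a ha).1.preimage (continuous_apply (k a))
  · intro a ha
    rw [Function.comp_apply, hk a ha]
    exact (hu a ha).2
  · intro f hf
    exact hIV fun a ha => congrArg f (hk a ha) ▸ hf a ha

lemma continuous_extend {α β Y : Type*} [TopologicalSpace Y] (f : α → β) (g : β → Y) :
    Continuous fun v : α → Y => Function.extend f v g := by
  refine continuous_pi fun b => ?_
  by_cases hb : ∃ a, f a = b
  · obtain ⟨a, ha⟩ : ∃ a, ∀ v : α → Y, Function.extend f v g b = v a :=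
      ⟨hb.choose, fun v => dif_pos hb⟩
    simpa only [ha] using continuous_apply a
  · simpa only [Function.extend_apply' _ _ b hb] using continuous_const

end Topology

section Chains

variable {K : Type*} [TopologicalSpace K] {f g h : C(K, ℝ)}

lemma prec_iff : Prec f g ↔ f ≠ g ∧ ∀ t, f t = 0 ∨ f t = g t := by
  refine and_congr_right fun _ => ⟨fun H t => or_iff_not_imp_left.2 fun ht =>
    H t (subset_closure ht), fun H => ?_⟩
  exact closure_minimal (fun t ht => (H t).resolve_left ht)
    (isClosed_eq f.continuous g.continuous)

lemma Prec.eq_of_ne_zero (hfg : Prec f g) {t : K} (ht : f t ≠ 0) : f t = g t :=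
  ((prec_iff.1 hfg).2 t).resolve_left ht

lemma Prec.eq_zero (hfg : Prec f g) {t : K} (ht : g t = 0) : f t = 0 :=
  ((prec_iff.1 hfg).2 t).elim id fun h => h.trans ht

lemma Prec.exists_eq_zero_ne_zero (hfg : Prec f g) : ∃ t, f t = 0 ∧ g t ≠ 0 := by
  obtain ⟨t, ht⟩ := DFunLike.ne_iff.1 hfg.1
  have hft : f t = 0 := not_not.1 fun hft => ht (hfg.eq_of_ne_zero hft)
  exact ⟨t, hft, fun hgt => ht (hft.trans hgt.symm)⟩

variable [CompactSpace K] {δ : ℝ} {F : Set C(K, ℝ)}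

lemma PrecDelta.exists_eq_zero_le_abs (hδ : 0 < δ) (hfg : PrecDelta δ f g) :
    ∃ t, f t = 0 ∧ δ ≤ |g t| := by
  by_contra! hlt
  refine hfg.2.not_gt ((ContinuousMap.norm_lt_iff _ hδ).2 fun t => ?_)
  by_cases hft : f t = 0
  · simpa [hft] using hlt t hft
  · simpa [hfg.1.eq_of_ne_zero hft] using hδ

lemma IsPrecChain.mono {G : Set C(K, ℝ)} (hF : IsPrecChain δ F) (hGF : G ⊆ F) :
    IsPrecChain δ G :=
  fun f hf g hg => hF f (hGF hf) g (hGF hg)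

lemma IsPrecChain.eq_or_prec_or_prec (hF : IsPrecChain δ F) (hf : f ∈ F) (hg : g ∈ F) :
    f = g ∨ Prec f g ∨ Prec g f :=
  or_iff_not_imp_left.2 fun hne => (hF f hf g hg hne).imp And.left And.left

lemma IsPrecChain.exists_forall_mem (hF : IsPrecChain δ F) (hne : F.Nonempty)
    {Z : C(K, ℝ) → Set K} (hclosed : ∀ f ∈ F, IsClosed (Z f)) (hZ : ∀ f ∈ F, (Z f).Nonempty)
    (hcomp : ∀ f g, Prec f g → Z f ⊆ Z g ∨ Z g ⊆ Z f) : ∃ t, ∀ f ∈ F, t ∈ Z f := by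
  have := hne.to_subtype
  obtain ⟨t, ht⟩ := exists_forall_mem_of_total (Z := fun f : F => Z f) (fun f => hZ f f.2)
    (fun f => hclosed f f.2) fun f g => by
      rcases hF.eq_or_prec_or_prec f.2 g.2 with hfg | hfg | hgf
      · exact Or.inl (hfg ▸ subset_rfl)
      · exact hcomp f g hfg
      · exact (hcomp g f hgf).symm
  exact ⟨t, fun f hf => ht ⟨f, hf⟩⟩

lemma IsPrecChain.notMem_closure_of_forall_prec (hδ : 0 < δ) (hF : IsPrecChain δ F)
    (hFh : ∀ f ∈ F, Prec f h) : ⇑h ∉ closure ((⇑) '' F : Set (K → ℝ)) := by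
  intro hcl
  have hnear : ∀ t, h t ≠ 0 → ∃ g ∈ F, g t ≠ 0 := fun t ht => by
    obtain ⟨_, hgt, g, hg, rfl⟩ := mem_closure_iff.1 hcl {u | u t ≠ 0}
      (isOpen_ne.preimage (continuous_apply t)) ht
    exact ⟨g, hg, hgt⟩
  have hZ : ∀ f ∈ F, {t | f t = 0 ∧ δ ≤ |h t|}.Nonempty := fun f hf => by
    obtain ⟨s, hfs, hhs⟩ := (hFh f hf).exists_eq_zero_ne_zero
    obtain ⟨g, hg, hgs⟩ := hnear s hhs
    have hfg : PrecDelta δ f g := (hF f hf g hg fun hfg => hgs (hfg ▸ hfs)).resolve_right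
      fun hgf => hgs (hgf.1.eq_zero hfs)
    obtain ⟨t, hft, hgt⟩ := hfg.exists_eq_zero_le_abs hδ
    exact ⟨t, hft, (hFh g hg).eq_of_ne_zero (abs_pos.1 (hδ.trans_le hgt)) ▸ hgt⟩
  have hne : F.Nonempty := image_nonempty.1 (closure_nonempty_iff.1 ⟨_, hcl⟩)
  obtain ⟨t, ht⟩ := hF.exists_forall_mem hne
    (fun f _ => (isClosed_eq f.continuous continuous_const).inter
      (isClosed_le continuous_const h.continuous.abs)) hZ
    fun f g hfg => Or.inr fun t ht => ⟨hfg.eq_zero ht.1, ht.2⟩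
  obtain ⟨f, hf⟩ := hne
  obtain ⟨g, hg, hgt⟩ := hnear t (abs_pos.1 (hδ.trans_le (ht f hf).2))
  exact hgt (ht g hg).1

lemma IsPrecChain.notMem_closure_of_prec_forall (hδ : 0 < δ) (hF : IsPrecChain δ F)
    (hhF : ∀ f ∈ F, Prec h f) : ⇑h ∉ closure ((⇑) '' F : Set (K → ℝ)) := by
  intro hcl
  have hnear : ∀ t, h t = 0 → ∀ ε > 0, ∃ g ∈ F, |g t| < ε := fun t ht ε hε => by
    obtain ⟨_, hgt, g, hg, rfl⟩ := mem_closure_iff.1 hcl {u | |u t| < ε}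
      (isOpen_lt (continuous_apply t).abs continuous_const) (by simpa [ht] using hε)
    exact ⟨g, hg, hgt⟩
  have hZ : ∀ f ∈ F, {t | h t = 0 ∧ δ ≤ |f t|}.Nonempty := fun f hf => by
    obtain ⟨s, hhs, hfs⟩ := (hhF f hf).exists_eq_zero_ne_zero
    obtain ⟨g, hg, hgs⟩ := hnear s hhs |f s| (abs_pos.2 hfs)
    have hgf : PrecDelta δ g f := (hF f hf g hg fun hfg => hgs.ne (hfg ▸ rfl)).resolve_left
      fun hfg => hgs.ne (hfg.1.eq_of_ne_zero hfs ▸ rfl)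
    obtain ⟨t, hgt, hft⟩ := hgf.exists_eq_zero_le_abs hδ
    exact ⟨t, (hhF g hg).eq_zero hgt, hft⟩
  have hne : F.Nonempty := image_nonempty.1 (closure_nonempty_iff.1 ⟨_, hcl⟩)
  obtain ⟨t, ht⟩ := hF.exists_forall_mem hne
    (fun f _ => (isClosed_eq h.continuous continuous_const).inter
      (isClosed_le continuous_const f.continuous.abs)) hZ
    fun f g hfg => Or.inl fun t ht =>
      ⟨ht.1, ht.2.trans_eq (congrArg abs (hfg.eq_of_ne_zero (abs_pos.1 (hδ.trans_le ht.2))))⟩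
  obtain ⟨f, hf⟩ := hne
  obtain ⟨g, hg, hgt⟩ := hnear t (ht f hf).1 δ hδ
  exact hgt.not_ge (ht g hg).2

lemma IsPrecChain.prec_or_prec_of_mem_closure (hF : IsPrecChain δ F)
    (hh : ⇑h ∈ closure ((⇑) '' F : Set (K → ℝ))) (hf : f ∈ F) (hne : f ≠ h) :
    Prec f h ∨ Prec h f := by
  have hclosed : IsClosed {u : K → ℝ |
      (∀ t, f t = u t) ∨ (∀ t, f t = 0 ∨ f t = u t) ∨ ∀ t, u t = 0 ∨ u t = f t} := by
    simp only [ofPred_or, ofPred_forall]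
    exact (isClosed_iInter fun t => isClosed_eq continuous_const (continuous_apply t)).union
      ((isClosed_iInter fun t => isClosed_const.union
        (isClosed_eq continuous_const (continuous_apply t))).union
      (isClosed_iInter fun t => (isClosed_eq (continuous_apply t) continuous_const).union
        (isClosed_eq (continuous_apply t) continuous_const)))
  have hmem := closure_minimal (s := ((⇑) '' F : Set (K → ℝ))) (by
    rintro _ ⟨g, hg, rfl⟩
    exact (hF.eq_or_prec_or_prec hf hg).imp DFunLike.congr_fun
      (Or.imp (fun hfg => (prec_iff.1 hfg).2) fun hgf => (prec_iff.1 hgf).2)) hclosed hh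
  exact (hmem.resolve_left fun heq => hne (DFunLike.ext f h heq)).imp
    (fun H => prec_iff.2 ⟨hne, H⟩) fun H => prec_iff.2 ⟨hne.symm, H⟩

theorem IsPrecChain.not_accPt (hδ : 0 < δ) (hF : IsPrecChain δ F) (h : C(K, ℝ)) :
    ¬AccPt (⇑h) (𝓟 ((⇑) '' F : Set (K → ℝ))) := by
  rw [accPt_principal_iff_clusterPt, ← mem_closure_iff_clusterPt, ← image_singleton,
    ← image_sdiff DFunLike.coe_injective]
  intro hcl
  have hG : IsPrecChain δ (F \ {h}) := hF.mono sdiff_subset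
  have hsplit : F \ {h} = {f ∈ F \ {h} | Prec f h} ∪ {f ∈ F \ {h} | Prec h f} := by
    rw [← sep_or, eq_comm, sep_eq_self_iff_mem_true]
    exact fun f hf => hG.prec_or_prec_of_mem_closure hcl hf hf.2
  rw [hsplit, image_union, closure_union] at hcl
  exact hcl.elim
    ((hG.mono (sep_subset _ _)).notMem_closure_of_forall_prec hδ fun f hf => hf.2)
    ((hG.mono (sep_subset _ _)).notMem_closure_of_prec_forall hδ fun f hf => hf.2)

theorem hasBishop_of_isLindelof_range_coe [T2Space K]
    (hK : IsLindelof (range ((⇑) : C(K, ℝ) → K → ℝ))) : HasBishop K := by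
  intro δ hδ F hF
  refine countable_of_injective_of_countable_image DFunLike.coe_injective.injOn
    (countable_of_isLindelof_of_forall_not_accPt hK (image_subset_range _ F) ?_)
  rintro _ ⟨h, rfl⟩
  exact hF.not_accPt hδ h

end Chains

section SigmaProduct

variable {Γ E : Type*} [Zero E] [TopologicalSpace E]

lemma exists_monotone_seq_countable_map_subset_succ {α : Type*} {Φ : Set α → Set α}
    (hΦ : ∀ A, A.Countable → (Φ A).Countable) :
    ∃ A : ℕ → Set α, Monotone A ∧ (∀ n, (A n).Countable) ∧ ∀ n, Φ (A n) ⊆ A (n + 1) := by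
  let A : ℕ → Set α := fun n => (fun B => B ∪ Φ B)^[n] ∅
  have hsucc : ∀ n, A (n + 1) = A n ∪ Φ (A n) := fun n => Function.iterate_succ_apply' _ n ∅
  refine ⟨A, monotone_nat_of_le_succ fun n => hsucc n ▸ subset_union_left, fun n => ?_,
    fun n => hsucc n ▸ subset_union_right⟩
  induction n with
  | zero => exact countable_empty
  | succ n ih => exact hsucc n ▸ ih.union (hΦ _ ih)

lemma indicator_iUnion_mem_closure {A : ℕ → Set Γ} (hA : Monotone A) {T : ℕ → Set (Γ → E)}
    (hT : ∀ n, ∀ w ∈ T n, Function.support w ⊆ ⋃ n, A n) {z : Γ → E}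
    (hz : ∀ n, (A n).indicator z ∈ closure ((A n).indicator '' T n)) :
    (⋃ n, A n).indicator z ∈ closure (⋃ n, T n) := by
  rw [mem_closure_iff]
  intro V hV hzV
  obtain ⟨I, u, hu, hIV⟩ := isOpen_pi_iff.1 hV _ hzV
  obtain ⟨n, hn⟩ := hA.directed_le.exists_mem_subset_of_finset_subset_biUnion
    (s := (I.finite_toSet.inter_of_left (⋃ n, A n)).toFinset) (by simp)
  have hstable (v : Γ → E) {γ : Γ} (hγ : γ ∈ I) :
      (A n).indicator v γ = (⋃ n, A n).indicator v γ := by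
    by_cases hγA : γ ∈ ⋃ n, A n
    · have hγn : γ ∈ A n := hn (by simpa using ⟨hγ, mem_iUnion.1 hγA⟩)
      rw [indicator_of_mem hγA, indicator_of_mem hγn]
    · rw [indicator_of_notMem hγA,
        indicator_of_notMem fun hγn => hγA (mem_iUnion.2 ⟨n, hγn⟩)]
  obtain ⟨_, hw, w, hwT, rfl⟩ := mem_closure_iff.1 (hz n) ((I : Set Γ).pi u)
    (isOpen_set_pi I.finite_toSet fun γ hγ => (hu γ hγ).1)
    fun γ hγ => hstable z hγ ▸ (hu γ hγ).2
  refine ⟨w, hIV fun γ hγ => ?_, mem_iUnion.2 ⟨n, hwT⟩⟩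
  rw [← indicator_eq_self.2 (hT n w hwT), ← hstable w hγ]
  exact hw γ hγ

variable [SecondCountableTopology E]

lemma exists_countable_subset_forall_indicator_mem_closure {X : Type*} (e : X → Γ → E)
    {A : Set Γ} (hA : A.Countable) (S : Set X) :
    ∃ D ⊆ S, D.Countable ∧ ∀ x ∈ S,
      A.indicator (e x) ∈ closure ((fun d => A.indicator (e d)) '' D) := by
  have := hA.to_subtype
  obtain ⟨D, hDS, hDc, hD⟩ :=
    exists_countable_subset_image_subset_closure (fun x => A.domRestrict (e x)) S
  have hext (z : Γ → E) :
      Function.extend ((↑) : A → Γ) (A.domRestrict z) (0 : Γ → E) = A.indicator z := by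
    ext γ
    by_cases hγ : γ ∈ A
    · rw [indicator_of_mem hγ]
      exact Subtype.val_injective.extend_apply _ _ (⟨γ, hγ⟩ : A)
    · rw [indicator_of_notMem hγ, Function.extend_apply' _ _ _ (by simpa using hγ), Pi.zero_apply]
  refine ⟨D, hDS, hDc, fun x hx => ?_⟩
  have hmem := image_closure_subset_closure_image (continuous_extend ((↑) : A → Γ) (0 : Γ → E))
    (mem_image_of_mem _ (hD (mem_image_of_mem _ hx)))
  simpa only [image_image, hext] using hmem

lemma exists_forall_indicator_mem_closure_image {X : Type*} {e : X → Γ → E}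
    (hsupp : ∀ x, (Function.support (e x)).Countable) {𝒮 : Set (Set X)} (h𝒮 : 𝒮.Countable) :
    ∃ A : Set Γ, ∀ S ∈ 𝒮, ∃ D ⊆ S, D.Countable ∧
      ∀ x ∈ S, A.indicator (e x) ∈ closure (e '' D) := by
  choose! D hDS hDc hD using fun (A : Set Γ) (S : Set X) (hA : A.Countable) =>
    exists_countable_subset_forall_indicator_mem_closure e hA S
  obtain ⟨A, hmono, hAc, hsucc⟩ := exists_monotone_seq_countable_map_subset_succ
    (Φ := fun A => ⋃ S ∈ 𝒮, ⋃ x ∈ D A S, Function.support (e x))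
    fun A hA => h𝒮.biUnion fun S _ => (hDc A S hA).biUnion fun x _ => hsupp x
  refine ⟨⋃ n, A n, fun S hS => ⟨⋃ n, D (A n) S, iUnion_subset fun n => hDS _ S (hAc n),
    countable_iUnion fun n => hDc _ S (hAc n), fun x hx => ?_⟩⟩
  rw [image_iUnion]
  refine indicator_iUnion_mem_closure hmono ?_ fun n => ?_
  · rintro n _ ⟨d, hd, rfl⟩
    intro γ hγ
    exact mem_iUnion.2 ⟨n + 1, hsucc n (mem_biUnion hS (mem_biUnion hd hγ))⟩
  · simpa only [image_image] using hD (A n) S (hAc n) x hx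

end SigmaProduct

section Corson

variable {K Γ E : Type*} [TopologicalSpace K] [CompactSpace K] [Zero E] [TopologicalSpace E]
  [T2Space E] {e : K → Γ → E}

lemma exists_continuousMap_eq_indicator (he : IsEmbedding e) {A : Set Γ}
    (hA : ∀ x, A.indicator (e x) ∈ closure (range e)) :
    ∃ r : C(K, K), ∀ x, e (r x) = A.indicator (e x) := by
  have hrange : IsClosed (range e) := (isCompact_range he.continuous).isClosed
  choose r hr using fun x => hrange.closure_subset (hA x)
  refine ⟨⟨r, he.continuous_iff.2 (continuous_pi fun γ => ?_)⟩, hr⟩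
  by_cases hγ : γ ∈ A
  · simpa [Function.comp_def, hr, hγ] using (continuous_apply γ).comp he.continuous
  · simpa [Function.comp_def, hr, hγ] using continuous_const

variable [SecondCountableTopology E]

lemma exists_continuousMap_mapsTo_closure (he : IsEmbedding e)
    (hsupp : ∀ x, (Function.support (e x)).Countable) {𝒮 : Set (Set (ℕ → K))}
    (h𝒮 : 𝒮.Countable) :
    ∃ r : C(K, K), ∀ S ∈ 𝒮, ∃ D ⊆ S, D.Countable ∧ MapsTo (r ∘ ·) S (closure D) := by
  let seq : (ℕ → K) → Γ → ℕ → E := fun x γ n => e (x n) γ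
  have hseq (x : ℕ → K) : (Function.support (seq x)).Countable :=
    (countable_iUnion fun n => hsupp (x n)).mono fun γ hγ => by
      simpa [seq, funext_iff] using hγ
  obtain ⟨A, hA⟩ := exists_forall_indicator_mem_closure_image hseq (h𝒮.insert univ)
  have hindicator (x : ℕ → K) (n : ℕ) (γ : Γ) :
      A.indicator (seq x) γ n = A.indicator (e (x n)) γ := by
    by_cases hγ : γ ∈ A <;> simp [seq, hγ]
  obtain ⟨r, hr⟩ := exists_continuousMap_eq_indicator he (A := A) fun x => by
    obtain ⟨D, -, -, hD⟩ := hA univ (mem_insert _ _)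
    have heval : Continuous fun (z : Γ → ℕ → E) γ => z γ 0 := by fun_prop
    have hmem := map_mem_closure heval (hD (fun _ => x) (mem_univ _)) (t := range e) <| by
      rintro _ ⟨d, -, rfl⟩
      exact mem_range_self (d 0)
    simpa only [hindicator] using hmem
  refine ⟨r, fun S hS => ?_⟩
  obtain ⟨D, hDS, hDc, hD⟩ := hA S (mem_insert_of_mem _ hS)
  refine ⟨D, hDS, hDc, fun x hx => ?_⟩
  have hswap : Continuous fun (z : Γ → ℕ → E) n γ => z γ n := by fun_prop
  have hmem := map_mem_closure hswap (hD x hx) (t := Pi.map (fun _ => e) '' D) <| by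
    rintro _ ⟨d, hd, rfl⟩
    exact mem_image_of_mem _ hd
  rw [(IsEmbedding.piMap fun _ : ℕ => he).isInducing.closure_eq_preimage_closure_image,
    mem_preimage]
  convert hmem using 1
  exact funext fun n => (hr (x n)).trans (funext fun γ => (hindicator x n γ).symm)

theorem isLindelof_range_coe_of_isEmbedding (he : IsEmbedding e)
    (hsupp : ∀ x, (Function.support (e x)).Countable) {Y : Type*} [TopologicalSpace Y]
    [SecondCountableTopology Y] : IsLindelof (range ((⇑) : C(K, Y) → K → Y)) := by
  rcases isEmpty_or_nonempty K with hK | hK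
  · exact (subsingleton_of_subsingleton : (range ((⇑) : C(K, Y) → K → Y)).Subsingleton).isLindelof
  intro l _ _ hl
  by_contra! hcluster
  let S : Set (ℕ → Y) → Set (ℕ → K) := fun W => {x | ∀ᶠ f in l, f ∘ x ∉ W}
  obtain ⟨r, hr⟩ := exists_continuousMap_mapsTo_closure he hsupp
    ((countable_countableBasis (ℕ → Y)).image S)
  choose! D hDS hDc hD using fun W hW => hr (S W) (mem_image_of_mem S hW)
  have havoid : ∀ᶠ f in l, ∀ W ∈ countableBasis (ℕ → Y), ∀ d ∈ D W, f ∘ d ∉ W :=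
    (eventually_countable_ball (countable_countableBasis _)).2 fun W hW =>
      (eventually_countable_ball (hDc W hW)).2 fun d hd => hDS W hW hd
  obtain ⟨_, hg, g, rfl⟩ := (havoid.and (le_principal_iff.1 hl)).exists
  have hdisj : Disjoint (𝓝 ⇑(g.comp r)) l :=
    disjoint_iff.2 (not_neBot.1 (hcluster _ (mem_range_self (g.comp r))))
  obtain ⟨V, ⟨hgV, hV⟩, hlV⟩ := (nhds_basis_opens _).disjoint_iff_left.1 hdisj
  obtain ⟨x, W', hW', hxW', hW'V⟩ := exists_comp_preimage_subset_of_isOpen hV hgV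
  obtain ⟨W, hW, hxW, hWW'⟩ :=
    (isBasis_countableBasis (ℕ → Y)).exists_subset_of_mem_open hxW' hW'
  have hrx : r ∘ x ∈ closure (D W) :=
    hD W hW (mem_of_superset hlV fun f hf hfW => hf (hW'V (hWW' hfW)))
  have hgcomp : Continuous fun y : ℕ → K => g ∘ y := by fun_prop
  obtain ⟨d, hdW, hdD⟩ :=
    mem_closure_iff.1 hrx _ ((isOpen_of_mem_countableBasis hW).preimage hgcomp) hxW
  exact hg W hW d hdD hdW

end Corson

theorem stmt12_general {K : Type*} [TopologicalSpace K] [CompactSpace K] [T2Space K]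
    {Γ E : Type*} [Zero E] [TopologicalSpace E] [T2Space E] [SecondCountableTopology E]
    {e : K → Γ → E} (he : IsEmbedding e) (hsupp : ∀ x, (Function.support (e x)).Countable) :
    HasBishop K :=
  hasBishop_of_isLindelof_range_coe (isLindelof_range_coe_of_isEmbedding he hsupp)

/-- Every Corson compact space has the Bishop property (B): if `K` embeds
topologically into `Σ(Γ) ⊆ ℝ^Γ` (pointwise topology), i.e. there is a topological
embedding `e : K → ℝ^Γ` such that every `e x` has countable support, then `K` has (B). -/
theorem stmt12 {K : Type*} [TopologicalSpace K] [CompactSpace K] [T2Space K]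
    {Γ : Type*} (e : K → Γ → ℝ) (he : Topology.IsEmbedding e)
    (hsupp : ∀ x : K, {γ : Γ | e x γ ≠ 0}.Countable) : HasBishop K :=
  stmt12_general he hsupp
end

section
/- Let K be a compact Hausdorff space such that C_p(K), the space C(K) of real-valued continuous functions on K equipped with the topology of pointwise convergence, is Lindelöf. Then K has the Bishop property (B). -/
open Set Topology Filter

/-!
The relation `f ≺ g` is a closed condition in each variable for pointwise convergence, so a
pointwise limit `h` of a chain is comparable with all its members, and `h` is already a pointwise
limit of the members below it or of those above it. On either part the functions `|f - h|` are
totally ordered, and Dini's argument upgrades pointwise to uniform approximation: some member `f`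
satisfies `‖f - h‖ < δ`. Members between `f` and `h` are then closer than `δ` to `f`, hence equal
to `f`, so `f` lies between `h` and every member, and in the limit between `h` and `h`, i.e.
`f = h`. Thus a `δ`-`≺`-chain has no accumulation point in `C_p(K)`, and in a Lindelöf space
such a set is countable.
-/

section AgreesOnSupport

variable {X E : Type*}

/-- `f` is a restriction of `g`, extended by zero: the non-strict form of `Prec`, for arbitrary
functions. Unlike in `Prec` the support is not closed up, which makes no difference for continuous
functions. -/
def AgreesOnSupport [Zero E] (f g : X → E) : Prop :=
  EqOn f g (Function.support f)

/-- `g` lies between `f` and `h` in the coarse sense that each of its values is the value of `f`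
or the value of `h` at the same point. -/
def PointwiseBetween (f g h : X → E) : Prop :=
  ∀ t, g t = f t ∨ g t = h t

instance [Zero E] : Std.Refl (AgreesOnSupport (X := X) (E := E)) :=
  ⟨fun f => eqOn_refl f _⟩

theorem AgreesOnSupport.pointwiseBetween [Zero E] {f g h : X → E} (hfg : AgreesOnSupport f g)
    (hgh : AgreesOnSupport g h) : PointwiseBetween f g h := by
  intro t
  by_cases hft : f t = 0
  · by_cases hgt : g t = 0
    · exact .inl (hgt.trans hft.symm)
    · exact .inr (hgh hgt)
  · exact .inl (hfg hft).symm

theorem PointwiseBetween.refl_left (f h : X → E) : PointwiseBetween f f h :=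
  fun _ => .inl rfl

theorem PointwiseBetween.symm {f g h : X → E} (hg : PointwiseBetween f g h) :
    PointwiseBetween h g f :=
  fun t => (hg t).symm

theorem PointwiseBetween.eq {f h : X → E} (hf : PointwiseBetween h f h) : f = h :=
  funext fun t => or_self_iff.1 (hf t)

theorem PointwiseBetween.dist_le [PseudoMetricSpace E] {f g h : X → E}
    (hg : PointwiseBetween f g h) (t : X) : dist (g t) (h t) ≤ dist (f t) (h t) := by
  rcases hg t with hgt | hgt <;> simp [hgt]

theorem isClosed_setOf_apply_eq [TopologicalSpace E] [T1Space E] (t : X) (a : E) :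
    IsClosed {f : X → E | f t = a} :=
  isClosed_singleton.preimage (continuous_apply t)

theorem isClosed_setOf_agreesOnSupport_left [Zero E] [TopologicalSpace E] [T1Space E]
    (g : X → E) : IsClosed {f | AgreesOnSupport f g} := by
  simp only [AgreesOnSupport, EqOn, Function.mem_support, ne_eq, ← or_iff_not_imp_left,
    ofPred_forall, ofPred_or]
  exact isClosed_iInter fun t => (isClosed_setOf_apply_eq t _).union (isClosed_setOf_apply_eq t _)

theorem isClosed_setOf_agreesOnSupport_right [Zero E] [TopologicalSpace E] [T1Space E]
    (f : X → E) : IsClosed {g | AgreesOnSupport f g} := by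
  simp only [AgreesOnSupport, EqOn, ofPred_forall, eq_comm (a := f _)]
  exact isClosed_biInter fun t _ => isClosed_setOf_apply_eq t _

theorem isClosed_setOf_pointwiseBetween [TopologicalSpace E] [T1Space E] (g h : X → E) :
    IsClosed {f | PointwiseBetween f g h} := by
  simp only [PointwiseBetween, ofPred_forall, ofPred_or, eq_comm (a := g _)]
  exact isClosed_iInter fun t => (isClosed_setOf_apply_eq t _).union isClosed_const

theorem agreesOnSupport_or_of_mem_closure [Zero E] [TopologicalSpace E] [T1Space E]
    {F : Set (X → E)} {f h : X → E} (hF : IsChain AgreesOnSupport F) (hf : f ∈ F)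
    (hh : h ∈ closure F) : AgreesOnSupport f h ∨ AgreesOnSupport h f := by
  refine closure_minimal (t := {g | AgreesOnSupport f g} ∪ {g | AgreesOnSupport g f}) ?_
    ((isClosed_setOf_agreesOnSupport_right f).union (isClosed_setOf_agreesOnSupport_left f)) hh
  exact fun g hg => hF.total hf hg

end AgreesOnSupport

section PointwiseLimits

variable {X E : Type*} [TopologicalSpace X] [CompactSpace X]

theorem mem_closure_of_directedOn_of_coe_mem_closure [PseudoMetricSpace E] {S : Set C(X, E)}
    {h : C(X, E)} (hS : DirectedOn (fun f g => ∀ t, dist (g t) (h t) ≤ dist (f t) (h t)) S)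
    (hh : ⇑h ∈ closure (DFunLike.coe '' S)) : h ∈ closure S := by
  refine Metric.mem_closure_iff.2 fun ε hε => ?_
  have : Nonempty S := (closure_nonempty_iff.1 ⟨_, hh⟩).of_image.to_subtype
  have hcover : univ ⊆ ⋃ f : S, {t | dist (f.1 t) (h t) < ε} := by
    intro t _
    have hnhds : {g : X → E | dist (g t) (h t) < ε} ∈ 𝓝 ⇑h :=
      (isOpen_lt (by fun_prop) continuous_const).mem_nhds (by simpa using hε)
    obtain ⟨_, hft, f, hf, rfl⟩ := mem_closure_iff_nhds.1 hh _ hnhds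
    exact mem_iUnion.2 ⟨⟨f, hf⟩, hft⟩
  have hdir : Directed (· ⊆ ·) fun f : S => {t | dist (f.1 t) (h t) < ε} := by
    intro f g
    obtain ⟨k, hk, hfk, hgk⟩ := hS f f.2 g g.2
    exact ⟨⟨k, hk⟩, fun t => (hfk t).trans_lt, fun t => (hgk t).trans_lt⟩
  obtain ⟨⟨f, hf⟩, hfε⟩ := isCompact_univ.elim_directed_cover _
    (fun f => isOpen_lt (f.1.continuous.dist h.continuous) continuous_const) hcover hdir
  rw [univ_subset_iff, eq_univ_iff_forall] at hfε
  exact ⟨f, hf, dist_comm f h ▸ (ContinuousMap.dist_lt_iff hε).2 hfε⟩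

variable [MetricSpace E] {δ : ℝ} {S : Set C(X, E)}

theorem mem_of_pointwiseBetween_of_coe_mem_closure {h : C(X, E)}
    (hS : ∀ f ∈ S, ∀ g ∈ S, PointwiseBetween f g h ∨ PointwiseBetween g f h)
    (hsep : S.Pairwise fun f g => δ ≤ dist f g) (hδ : 0 < δ)
    (hh : ⇑h ∈ closure (DFunLike.coe '' S)) : h ∈ S := by
  have hdir : DirectedOn (fun f g => ∀ t, dist (g t) (h t) ≤ dist (f t) (h t)) S := by
    intro f hf g hg
    rcases hS f hf g hg with hfg | hgf
    · exact ⟨g, hg, hfg.dist_le, fun _ => le_rfl⟩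
    · exact ⟨f, hf, fun _ => le_rfl, hgf.dist_le⟩
  obtain ⟨f, hf, hfh⟩ :=
    Metric.mem_closure_iff.1 (mem_closure_of_directedOn_of_coe_mem_closure hdir hh) δ hδ
  rw [dist_comm, ContinuousMap.dist_lt_iff hδ] at hfh
  have hextremal : ∀ g ∈ S, PointwiseBetween g f h := by
    intro g hg
    refine (hS f hf g hg).elim (fun hfg => ?_) id
    have hgf : dist g f < δ := (ContinuousMap.dist_lt_iff hδ).2 fun t =>
      (hfg.symm.dist_le t).trans_lt (dist_comm (f t) (h t) ▸ hfh t)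
    rw [hsep.eq hg hf hgf.not_ge]
    exact .refl_left _ _
  have hfh_between : PointwiseBetween h f h :=
    closure_minimal (t := {g | PointwiseBetween g f h}) (image_subset_iff.2 hextremal)
      (isClosed_setOf_pointwiseBetween _ _) hh
  rwa [← DFunLike.coe_injective hfh_between.eq]

theorem not_accPt_image_coe_of_isChain [Zero E]
    (hS : IsChain AgreesOnSupport (DFunLike.coe '' S : Set (X → E)))
    (hsep : S.Pairwise fun f g => δ ≤ dist f g) (hδ : 0 < δ) (h : C(X, E)) :
    ¬ AccPt (⇑h) (𝓟 (DFunLike.coe '' S)) := by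
  intro hacc
  set T : Set C(X, E) := S \ {h}
  have hT : ⇑h ∈ closure (DFunLike.coe '' T) := by
    rw [accPt_principal_iff_clusterPt, ← mem_closure_iff_clusterPt] at hacc
    rwa [image_sdiff DFunLike.coe_injective, image_singleton]
  have htotal : ∀ f ∈ S, ∀ g ∈ S, AgreesOnSupport f g ∨ AgreesOnSupport g f :=
    fun f hf g hg => hS.total (mem_image_of_mem _ hf) (mem_image_of_mem _ hg)
  have hcomparable : T = {f ∈ T | AgreesOnSupport f h} ∪ {f ∈ T | AgreesOnSupport h f} := by
    rw [← sep_or, eq_comm, sep_eq_self_iff_mem_true]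
    intro f hf
    exact agreesOnSupport_or_of_mem_closure (hS.mono (image_mono sdiff_subset))
      (mem_image_of_mem _ hf) hT
  rw [hcomparable, image_union, closure_union] at hT
  rcases hT with hbelow | habove
  · have hmem := mem_of_pointwiseBetween_of_coe_mem_closure
      (fun f hf g hg => (htotal f hf.1.1 g hg.1.1).imp
        (fun hfg => hfg.pointwiseBetween hg.2) fun hgf => hgf.pointwiseBetween hf.2)
      (hsep.mono fun _ hf => hf.1.1) hδ hbelow
    exact hmem.1.2 rfl
  · have hmem := mem_of_pointwiseBetween_of_coe_mem_closure
      (fun f hf g hg => (htotal g hg.1.1 f hf.1.1).imp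
        (fun hgf => (hg.2.pointwiseBetween hgf).symm)
        fun hfg => (hf.2.pointwiseBetween hfg).symm)
      (hsep.mono fun _ hf => hf.1.1) hδ habove
    exact hmem.1.2 rfl

end PointwiseLimits

theorem countable_of_isLindelof_of_not_accPt {Y : Type*} [TopologicalSpace Y] {s A : Set Y}
    (hs : IsLindelof s) (hAs : A ⊆ s) (hA : ∀ y ∈ s, ¬ AccPt y (𝓟 A)) : A.Countable := by
  have hnhds : ∀ y ∈ s, {z | z ∈ A → z = y} ∈ 𝓝 y := by
    intro y hy
    have hy' := hA y hy
    rw [accPt_iff_frequently, not_frequently] at hy'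
    filter_upwards [hy'] with z hz hzA
    exact by_contra fun hne => hz ⟨hne, hzA⟩
  obtain ⟨T, hT, -, hcover⟩ := hs.elim_nhds_subcover _ hnhds
  refine hT.mono fun z hz => ?_
  obtain ⟨y, hyT, hzy⟩ := mem_iUnion₂.1 (hcover (hAs hz))
  exact hzy hz ▸ hyT

theorem Prec.agreesOnSupport {K : Type*} [TopologicalSpace K] {f g : C(K, ℝ)}
    (hfg : Prec f g) : AgreesOnSupport f g :=
  fun t ht => hfg.2 t (subset_closure ht)

section IsPrecChain

variable {K : Type*} [TopologicalSpace K] [CompactSpace K] {δ : ℝ} {F : Set C(K, ℝ)}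

theorem IsPrecChain.isChain (hF : IsPrecChain δ F) :
    IsChain AgreesOnSupport (DFunLike.coe '' F : Set (K → ℝ)) := by
  rintro _ ⟨f, hf, rfl⟩ _ ⟨g, hg, rfl⟩ hne
  exact (hF f hf g hg fun hfg => hne (congrArg _ hfg)).imp (·.1.agreesOnSupport)
    (·.1.agreesOnSupport)

theorem IsPrecChain.pairwise_le_dist (hF : IsPrecChain δ F) :
    F.Pairwise fun f g => δ ≤ dist f g := by
  intro f hf g hg hne
  rcases hF f hf g hg hne with hfg | hgf
  · exact dist_eq_norm f g ▸ hfg.2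
  · exact dist_comm g f ▸ dist_eq_norm g f ▸ hgf.2

end IsPrecChain

theorem stmt14_general {X E : Type*} [TopologicalSpace X] [CompactSpace X] [Zero E]
    [MetricSpace E] (hL : IsLindelof {f : X → E | Continuous f}) {δ : ℝ} (hδ : 0 < δ)
    {F : Set C(X, E)} (hF : IsChain AgreesOnSupport (DFunLike.coe '' F : Set (X → E)))
    (hsep : F.Pairwise fun f g => δ ≤ dist f g) : F.Countable := by
  refine countable_of_injective_of_countable_image DFunLike.coe_injective.injOn ?_
  refine countable_of_isLindelof_of_not_accPt hL (image_subset_iff.2 fun f _ => f.continuous) ?_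
  exact fun h hh => not_accPt_image_coe_of_isChain hF hsep hδ ⟨h, hh⟩

/-- If `C_p(K)` — the set of continuous real-valued functions on `K` viewed as a
subspace of `ℝ^K` with the product (pointwise convergence) topology — is Lindelöf,
then `K` has the Bishop property (B). -/
theorem stmt14 {K : Type*} [TopologicalSpace K] [CompactSpace K] [T2Space K]
    (hL : IsLindelof {f : K → ℝ | Continuous f}) : HasBishop K :=
  fun _ hδ _ hF => stmt14_general hL hδ hF.isChain hF.pairwise_le_dist
end

section
/- Let K and M be compact Hausdorff spaces and π : K → M a continuous surjection. If K has the Bishop property (B), then M has the Bishop property (B). -/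
open Set Topology Filter

/-!
Since `π` is surjective, `f ↦ f ∘ π` embeds `C(M)` isometrically into `C(K)`. It also preserves
`≺`: by continuity `supp (f ∘ π) ⊆ π⁻¹(supp f)`, so `f = g` on `supp f` forces `f ∘ π = g ∘ π` on
`supp (f ∘ π)`. Hence a `δ`-`≺`-chain in `C(M)` is mapped bijectively onto a `δ`-`≺`-chain in
`C(K)`, which is countable when `K` has the Bishop property.
-/

section Pullback

variable {X Y : Type*} [TopologicalSpace X] [TopologicalSpace Y] {p : C(X, Y)}

lemma injective_comp_of_surjective {Z : Type*} [TopologicalSpace Z] (hp : Function.Surjective p) :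
    Function.Injective fun f : C(Y, Z) => f.comp p :=
  fun _ _ => (ContinuousMap.cancel_right hp).1

lemma norm_comp_of_surjective {E : Type*} [SeminormedAddCommGroup E] [CompactSpace X]
    [CompactSpace Y] (hp : Function.Surjective p) (f : C(Y, E)) : ‖f.comp p‖ = ‖f‖ := by
  rw [ContinuousMap.norm_eq_iSup_norm, ContinuousMap.norm_eq_iSup_norm]
  exact hp.iSup_comp fun y => ‖f y‖

lemma Prec.comp {f g : C(Y, ℝ)} (h : Prec f g) (hp : Function.Surjective p) :
    Prec (f.comp p) (g.comp p) :=
  ⟨(injective_comp_of_surjective hp).ne h.1,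
    fun x hx => h.2 (p x) (tsupport_comp_subset_preimage f p.continuous hx)⟩

variable [CompactSpace X] [CompactSpace Y] {δ : ℝ}

lemma PrecDelta.comp {f g : C(Y, ℝ)} (h : PrecDelta δ f g) (hp : Function.Surjective p) :
    PrecDelta δ (f.comp p) (g.comp p) := by
  have norm_sub_comp : ‖f.comp p - g.comp p‖ = ‖f - g‖ := norm_comp_of_surjective hp (f - g)
  exact ⟨h.1.comp hp, norm_sub_comp ▸ h.2⟩

lemma IsPrecChain.image_comp {F : Set C(Y, ℝ)} (hF : IsPrecChain δ F)
    (hp : Function.Surjective p) : IsPrecChain δ ((fun f => f.comp p) '' F) := by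
  rintro _ ⟨f, hf, rfl⟩ _ ⟨g, hg, rfl⟩ hne
  have hfg : f ≠ g := ne_of_apply_ne (fun f => f.comp p) hne
  exact (hF f hf g hg hfg).imp (·.comp hp) (·.comp hp)

end Pullback

/-- If `π : K → M` is a continuous surjection between compact Hausdorff spaces and `K`
has the Bishop property (B), then so does `M`. -/
theorem stmt15 {K M : Type*} [TopologicalSpace K] [CompactSpace K] [T2Space K]
    [TopologicalSpace M] [CompactSpace M] [T2Space M]
    (π : K → M) (hcont : Continuous π) (hsurj : Function.Surjective π)
    (hK : HasBishop K) : HasBishop M := by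
  intro δ hδ F hF
  let p : C(K, M) := ⟨π, hcont⟩
  have hp : Function.Surjective p := hsurj
  have image_countable : ((fun f => f.comp p) '' F).Countable := hK δ hδ _ (hF.image_comp hp)
  exact countable_of_injective_of_countable_image (injective_comp_of_surjective hp).injOn
    image_countable
end

section
/- The ordinal interval [0, ω₁] (the set of ordinals ≤ ω₁ with the order topology, a compact Hausdorff space, where ω₁ is the first uncountable ordinal) does not have the Bishop property (B): the family of indicator functions {𝟙_{[0,α]} : α < ω₁} is an uncountable 1-≺-chain in C([0, ω₁]). -/
open Set Topology Filter Ordinal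

noncomputable instance : CompactSpace ↥(Set.Iic (ω₁ : Ordinal)) :=
  isCompact_iff_compactSpace.mp (by rw [← Set.Icc_bot]; exact isCompact_Icc)

/-- The family of indicator functions `𝟙_{[0,α]}` for `α < ω₁`, as continuous
functions on `[0, ω₁]`. -/
def IndicatorChain : Set C(↥(Set.Iic (ω₁ : Ordinal)), ℝ) :=
  {f | ∃ α : Ordinal, α < ω₁ ∧
    ∀ x : ↥(Set.Iic (ω₁ : Ordinal)), f x = if (x : Ordinal) ≤ α then 1 else 0}

/-!
If `U ⊂ V` are clopen, then `𝟙_U` agrees with `𝟙_V` on its support `U`, while at a point of `V \ U`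
the two differ by `1`; hence `𝟙_U ≺₁ 𝟙_V`. So any uncountable chain of clopen sets refutes the
Bishop property, and the segments `[0, α] = [0, α + 1)`, `α < ω₁`, form such a chain.
-/

open TopologicalSpace (Clopens)

section Clopen

variable {K : Type*} [TopologicalSpace K]

/-- The indicator function `𝟙_U` of a clopen set `U`, as a real-valued continuous function. -/
noncomputable def clopenIndicator (U : Clopens K) : C(K, ℝ) :=
  LocallyConstant.charFn ℝ U.isClopen

theorem coe_clopenIndicator (U : Clopens K) :
    ⇑(clopenIndicator U) = (U : Set K).indicator 1 :=
  rfl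

theorem clopenIndicator_injective :
    Function.Injective (clopenIndicator : Clopens K → C(K, ℝ)) := fun _ _ h ↦
  SetLike.coe_injective <| indicator_one_inj ℝ <| congrArg DFunLike.coe h

theorem support_clopenIndicator (U : Clopens K) :
    Function.support (clopenIndicator U) = U := by
  rw [coe_clopenIndicator, Set.support_indicator, Function.support_one, inter_univ]

theorem prec_clopenIndicator_of_lt {U V : Clopens K} (hUV : U < V) :
    Prec (clopenIndicator U) (clopenIndicator V) := by
  refine ⟨clopenIndicator_injective.ne hUV.ne, fun t ht ↦ ?_⟩
  have htU : t ∈ (U : Set K) := by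
    rwa [← Function.support, support_clopenIndicator, U.isClopen.isClosed.closure_eq] at ht
  have htV : t ∈ (V : Set K) := hUV.le htU
  rw [coe_clopenIndicator, coe_clopenIndicator, indicator_of_mem htU, indicator_of_mem htV]

variable [CompactSpace K]

theorem one_le_norm_clopenIndicator_sub_of_ne {U V : Clopens K} (hUV : U ≠ V) :
    1 ≤ ‖clopenIndicator U - clopenIndicator V‖ := by
  obtain ⟨x, hx⟩ : ∃ x, ¬ (x ∈ U ↔ x ∈ V) := not_forall.1 (mt SetLike.ext hUV)
  calc (1 : ℝ) = ‖(clopenIndicator U - clopenIndicator V) x‖ := by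
        by_cases hxU : x ∈ U <;> by_cases hxV : x ∈ V <;> simp_all [coe_clopenIndicator]
    _ ≤ ‖clopenIndicator U - clopenIndicator V‖ := ContinuousMap.norm_coe_le_norm _ x

theorem precDelta_one_clopenIndicator_of_lt {U V : Clopens K} (hUV : U < V) :
    PrecDelta 1 (clopenIndicator U) (clopenIndicator V) :=
  ⟨prec_clopenIndicator_of_lt hUV, one_le_norm_clopenIndicator_sub_of_ne hUV.ne⟩

theorem isPrecChain_image_clopenIndicator {C : Set (Clopens K)}
    (hC : IsChain (· ≤ ·) C) : IsPrecChain 1 (clopenIndicator '' C) := by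
  rintro _ ⟨U, hU, rfl⟩ _ ⟨V, hV, rfl⟩ hne
  have hUV : U ≠ V := ne_of_apply_ne clopenIndicator hne
  exact (hC hU hV hUV).imp (fun hle ↦ precDelta_one_clopenIndicator_of_lt (hle.lt_of_ne hUV))
    fun hle ↦ precDelta_one_clopenIndicator_of_lt (hle.lt_of_ne hUV.symm)

theorem stmt16_general [T2Space K] {C : Set (Clopens K)} (hC : IsChain (· ≤ ·) C)
    (huncountable : ¬ C.Countable) :
    ¬ (clopenIndicator '' C).Countable ∧ IsPrecChain 1 (clopenIndicator '' C) ∧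
      ¬ HasBishop K := by
  have himage : ¬ (clopenIndicator '' C).Countable :=
    mt (countable_of_injective_of_countable_image clopenIndicator_injective.injOn) huncountable
  have hchain := isPrecChain_image_clopenIndicator hC
  exact ⟨himage, hchain, fun hK ↦ himage (hK 1 one_pos _ hchain)⟩

end Clopen

section SuccOrder

variable {X : Type*} [LinearOrder X] [TopologicalSpace X] [OrderClosedTopology X] [SuccOrder X]

theorem isOpen_Iic_of_succOrder (a : X) : IsOpen (Iic a) := by
  by_cases ha : IsMax a
  · rw [ha.isTop.Iic_eq]
    exact isOpen_univ
  · rw [← Order.Iio_succ_of_not_isMax ha]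
    exact isOpen_Iio

/-- The initial segment `(-∞, a]` of a successor order, as a clopen set. -/
def iicClopens (a : X) : Clopens X :=
  ⟨Iic a, isClosed_Iic, isOpen_Iic_of_succOrder a⟩

theorem iicClopens_strictMono : StrictMono (iicClopens : X → Clopens X) :=
  fun _ _ hab ↦ Iic_ssubset_Iic.2 hab

theorem isChain_image_iicClopens (s : Set X) : IsChain (· ≤ ·) (iicClopens '' s) :=
  iicClopens_strictMono.monotone.isChain_range.mono (image_subset_range _ s)

theorem not_countable_image_iicClopens {s : Set X} (hs : ¬ s.Countable) :
    ¬ (iicClopens '' s).Countable :=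
  mt (countable_of_injective_of_countable_image iicClopens_strictMono.injective.injOn) hs

end SuccOrder

theorem countable_Iio_ordinal_iff {o : Ordinal} : (Iio o).Countable ↔ o < ω₁ := by
  rw [← Cardinal.le_aleph0_iff_set_countable, Cardinal.mk_Iio_ordinal, Cardinal.lift_le_aleph0,
    ← Cardinal.lt_aleph_one_iff, ← Cardinal.lt_ord, Cardinal.ord_aleph]

theorem not_countable_Iio_top_Iic_omega_one : ¬ (Iio (⊤ : Iic (ω₁ : Ordinal))).Countable := by
  intro h
  have hω₁ : (Iio (ω₁ : Ordinal)).Countable := by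
    simpa only [image_subtype_val_Iic_Iio, Iic.coe_top] using h.image Subtype.val
  exact lt_irrefl _ (countable_Iio_ordinal_iff.1 hω₁)

theorem not_countable_image_iicClopens_Iio_top :
    ¬ (iicClopens '' Iio (⊤ : Iic (ω₁ : Ordinal))).Countable :=
  not_countable_image_iicClopens not_countable_Iio_top_Iic_omega_one

theorem indicatorChain_eq_image :
    IndicatorChain = clopenIndicator '' (iicClopens '' Iio (⊤ : Iic (ω₁ : Ordinal))) := by
  ext f
  rw [image_image]
  constructor
  · rintro ⟨α, hα, hf⟩
    exact ⟨⟨α, hα.le⟩, hα, ContinuousMap.ext fun x ↦ (hf x).symm⟩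
  · rintro ⟨α, hα, rfl⟩
    exact ⟨α, hα, fun _ ↦ rfl⟩

/-- The ordinal interval `[0, ω₁]` (with the order topology, a compact Hausdorff
space) does not have the Bishop property (B): the family of indicator functions
`{𝟙_{[0,α]} : α < ω₁}` is an uncountable `1`-`≺`-chain in `C([0, ω₁])`. -/
theorem stmt16 :
    ¬ IndicatorChain.Countable ∧ IsPrecChain 1 IndicatorChain ∧
      ¬ HasBishop ↥(Set.Iic (ω₁ : Ordinal)) := by
  -- The three conjuncts live in independent universes, so each needs its own instance.
  refine ⟨?_, ?_, ?_⟩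
  · rw [indicatorChain_eq_image]
    exact (stmt16_general (isChain_image_iicClopens _) not_countable_image_iicClopens_Iio_top).1
  · rw [indicatorChain_eq_image]
    exact (stmt16_general (isChain_image_iicClopens _) not_countable_image_iicClopens_Iio_top).2.1
  · exact (stmt16_general (isChain_image_iicClopens _) not_countable_image_iicClopens_Iio_top).2.2
end

section
/- The Bishop property (B) is not preserved under Banach space isomorphisms of C(K)-spaces: there exist compact Hausdorff spaces K₁ and K₂ such that the Banach spaces C(K₁) and C(K₂) are isomorphic (linearly homeomorphic), K₁ has the Bishop property (B), and K₂ does not have the Bishop property (B). -/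
open Set Topology Filter

/-!
A compact locally connected space has (B): only finitely many components of `{g ≠ 0}` contain a
point where `|g| ≥ δ`, and along a `δ`-`≺`-chain this number is strictly increasing. On the other
hand, an uncountable chain of clopen sets gives an uncountable `1`-`≺`-chain of indicator functions.

For a compact space `F`, let `B` be the dual ball of `C(F)` with the weak-* topology; being convex,
it is locally connected. Evaluation `E f φ = φ f` extends every `f ∈ C(F)` from the Dirac
functionals to `B` and vanishes at `0 ∈ B`. Let `q : B → Q` collapse `0` and the Dirac functionals
to one point. Then `(f, h) ↦ E f + h ∘ q` is an isomorphism from `C(F ⊕ Q)` onto `C(B)`: subtracting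
`E (g|F - g 0)` from `g ∈ C(B)` leaves a function constant on the collapsed set. Thus `C(B)` and
`C(F ⊕ Q)` are isomorphic, and `F = βℚ` has an uncountable chain of clopen sets, one for each real
number.
-/

theorem finite_image_connectedComponentIn {X : Type*} [TopologicalSpace X]
    [LocallyConnectedSpace X] {C U : Set X} (hC : IsCompact C) (hU : IsOpen U) (hCU : C ⊆ U) :
    (connectedComponentIn U '' C).Finite := by
  obtain ⟨T, -, hcover⟩ := hC.elim_nhds_subcover (connectedComponentIn U)
    fun x hx => connectedComponentIn_mem_nhds (hU.mem_nhds (hCU hx))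
  refine (T.finite_toSet.image (connectedComponentIn U)).subset ?_
  rintro _ ⟨x, hx, rfl⟩
  obtain ⟨y, hyT, hxy⟩ := mem_iUnion₂.mp (hcover hx)
  exact ⟨y, hyT, connectedComponentIn_eq hxy⟩

theorem connectedComponentIn_eq_of_inter_closure_subset {X : Type*} [TopologicalSpace X]
    {U V : Set X} (hU : IsOpen U) (hUV : U ⊆ V) (hVU : V ∩ closure U ⊆ U) {x : X} (hx : x ∈ U) :
    connectedComponentIn U x = connectedComponentIn V x := by
  refine (connectedComponentIn_mono x hUV).antisymm ?_
  have hxV : x ∈ connectedComponentIn V x := mem_connectedComponentIn (hUV hx)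
  have hcover : connectedComponentIn V x ⊆ U ∪ (closure U)ᶜ := fun y hy => by
    by_cases hyU : y ∈ closure U
    · exact Or.inl (hVU ⟨connectedComponentIn_subset V x hy, hyU⟩)
    · exact Or.inr hyU
  refine isPreconnected_connectedComponentIn.subset_connectedComponentIn hxV ?_
  exact isPreconnected_connectedComponentIn.subset_left_of_subset_union hU
    isClosed_closure.isOpen_compl (disjoint_compl_right.mono_left subset_closure) hcover
    ⟨x, hxV, hx⟩

section LocallyConnected

variable {K : Type*} [TopologicalSpace K] {δ : ℝ} {f g : C(K, ℝ)}

theorem Prec.eq_of_mem_support (h : Prec f g) {t : K} (ht : t ∈ Function.support f) : f t = g t :=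
  h.2 t (subset_closure ht)

theorem Prec.connectedComponentIn_support_eq (h : Prec f g) {t : K}
    (ht : t ∈ Function.support f) :
    connectedComponentIn (Function.support f) t = connectedComponentIn (Function.support g) t := by
  refine connectedComponentIn_eq_of_inter_closure_subset f.continuous.isOpen_support
    (fun s hs => ?_) (fun s hs => ?_) ht
  · exact (h.eq_of_mem_support hs).symm.trans_ne hs
  · exact (h.2 s hs.2).trans_ne hs.1

/-- The components of `{t | g t ≠ 0}` on which `|g|` attains a value `≥ δ`. Their number is the rank
of `g` in a `δ`-`≺`-chain. -/
def peakComponents (δ : ℝ) (g : C(K, ℝ)) : Set (Set K) :=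
  connectedComponentIn (Function.support g) '' {t | δ ≤ |g t|}

theorem mem_support_of_le_abs (hδ : 0 < δ) {t : K} (ht : δ ≤ |g t|) : t ∈ Function.support g :=
  abs_pos.mp (hδ.trans_le ht)

theorem Prec.peakComponents_subset (hδ : 0 < δ) (h : Prec f g) :
    peakComponents δ f ⊆ peakComponents δ g := by
  rintro _ ⟨t, ht, rfl⟩
  have htf := mem_support_of_le_abs hδ ht
  have htg : δ ≤ |g t| := h.eq_of_mem_support htf ▸ ht
  exact ⟨t, htg, (h.connectedComponentIn_support_eq htf).symm⟩

variable [CompactSpace K]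

theorem PrecDelta.exists_eq_zero_and_le_abs (hδ : 0 < δ) (h : PrecDelta δ f g) :
    ∃ t, f t = 0 ∧ δ ≤ |g t| := by
  obtain ⟨t, ht⟩ : ∃ t, δ ≤ |f t - g t| := by
    by_contra! hlt
    exact h.2.not_gt ((ContinuousMap.norm_lt_iff _ hδ).mpr hlt)
  have hft : f t = 0 := by
    by_contra hne
    rw [h.1.eq_of_mem_support hne, sub_self, abs_zero] at ht
    exact hδ.not_ge ht
  exact ⟨t, hft, by rwa [hft, zero_sub, abs_neg] at ht⟩

theorem PrecDelta.peakComponents_ssubset (hδ : 0 < δ) (h : PrecDelta δ f g) :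
    peakComponents δ f ⊂ peakComponents δ g := by
  refine ⟨h.1.peakComponents_subset hδ, fun hsub => ?_⟩
  obtain ⟨t, hft, hgt⟩ := h.exists_eq_zero_and_le_abs hδ
  obtain ⟨s, -, hs⟩ := hsub ⟨t, hgt, rfl⟩
  have hmem : t ∈ connectedComponentIn (Function.support f) s :=
    hs ▸ mem_connectedComponentIn (mem_support_of_le_abs hδ hgt)
  exact connectedComponentIn_subset _ _ hmem hft

theorem finite_peakComponents [LocallyConnectedSpace K] (hδ : 0 < δ) (g : C(K, ℝ)) :
    (peakComponents δ g).Finite :=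
  finite_image_connectedComponentIn
    (isClosed_le continuous_const g.continuous.abs).isCompact g.continuous.isOpen_support
    fun _ ht => mem_support_of_le_abs hδ ht

theorem hasBishop_of_locallyConnectedSpace (K : Type*) [TopologicalSpace K] [CompactSpace K]
    [T2Space K] [LocallyConnectedSpace K] : HasBishop K := by
  intro δ hδ F hF
  have hlt {f g : C(K, ℝ)} (h : PrecDelta δ f g) :
      (peakComponents δ f).ncard < (peakComponents δ g).ncard :=
    ncard_lt_ncard (h.peakComponents_ssubset hδ) (finite_peakComponents hδ g)
  have hinj : InjOn (fun g => (peakComponents δ g).ncard) F := fun f hf g hg hfg => by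
    by_contra hne
    rcases hF f hf g hg hne with h | h
    · exact (hlt h).ne hfg
    · exact (hlt h).ne' hfg
  exact (mapsTo_univ _ F).countable_of_injOn hinj countable_univ

end LocallyConnected

section ClopenChains

variable {K : Type*} [TopologicalSpace K] [CompactSpace K]

theorem precDelta_charFn {U V : Set K} (hU : IsClopen U) (hV : IsClopen V) (hUV : U ⊂ V) :
    PrecDelta 1 (LocallyConstant.charFn ℝ hU : C(K, ℝ)) (LocallyConstant.charFn ℝ hV) := by
  obtain ⟨x, hxV, hxU⟩ := exists_of_ssubset hUV
  have hsub : ((LocallyConstant.charFn ℝ hU : C(K, ℝ)) -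
      (LocallyConstant.charFn ℝ hV : C(K, ℝ))) x = -1 := by
    simp [LocallyConstant.coe_charFn, hxU, hxV]
  refine ⟨⟨fun heq => ?_, fun t ht => ?_⟩, ?_⟩
  · simp [heq] at hsub
  · have htU : t ∈ U := by
      refine closure_minimal (fun s hs => ?_) hU.isClosed ht
      by_contra hsU
      exact hs ((LocallyConstant.charFn_eq_zero ℝ s hU).mpr hsU)
    simp [LocallyConstant.coe_charFn, htU, hUV.subset htU]
  · simpa only [hsub, norm_neg, norm_one] using ContinuousMap.norm_coe_le_norm
      ((LocallyConstant.charFn ℝ hU : C(K, ℝ)) - (LocallyConstant.charFn ℝ hV : C(K, ℝ))) x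

theorem not_hasBishop_of_strictMono_isClopen [T2Space K] {ι : Type*} [LinearOrder ι]
    [Uncountable ι] {U : ι → Set K} (hU : ∀ i, IsClopen (U i)) (hmono : StrictMono U) :
    ¬ HasBishop K := by
  intro hB
  let χ (i : ι) : C(K, ℝ) := LocallyConstant.charFn ℝ (hU i)
  have hχ {i j : ι} (hij : i < j) : PrecDelta 1 (χ i) (χ j) :=
    precDelta_charFn (hU i) (hU j) (hmono hij)
  have hinj : Function.Injective χ := Function.Injective.of_lt_imp_ne fun i j hij => (hχ hij).1.1
  have hchain : IsPrecChain 1 (range χ) := by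
    rintro _ ⟨i, rfl⟩ _ ⟨j, rfl⟩ hne
    exact (ne_of_apply_ne χ hne).lt_or_gt.imp hχ hχ
  have hcount : Countable (range χ) := (hB 1 one_pos _ hchain).to_subtype
  exact not_countable ((Equiv.ofInjective χ hinj).countable_iff.mpr hcount)

end ClopenChains

section Collapse

variable {F B : Type*} [TopologicalSpace F] [TopologicalSpace B]

/-- The largest Hausdorff quotient of `B` in which all points of `A` are identified. For `B` compact
Hausdorff and `A` closed this is the usual quotient `B / A`; the construction by `T2Quotient` makes
its separation and its universal property immediate. -/
abbrev Collapse (A : Set B) : Type _ :=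
  T2Quotient (Quot fun a b : B => a ∈ A ∧ b ∈ A)

instance [CompactSpace B] (A : Set B) : CompactSpace (Collapse A) :=
  Quotient.compactSpace

/-- The quotient map onto `Collapse A`. -/
def Collapse.mk (A : Set B) : C(B, Collapse A) where
  toFun b := T2Quotient.mk (Quot.mk _ b)
  continuous_toFun := (T2Quotient.continuous_mk _).comp continuous_quot_mk

theorem Collapse.mk_surjective (A : Set B) : Function.Surjective (mk A) :=
  (T2Quotient.surjective_mk _).comp Quot.mk_surjective

theorem Collapse.mk_eq_mk {A : Set B} {a b : B} (ha : a ∈ A) (hb : b ∈ A) : mk A a = mk A b :=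
  congrArg T2Quotient.mk (Quot.sound ⟨ha, hb⟩)

theorem Collapse.exists_comp_mk_eq {Y : Type*} [TopologicalSpace Y] [T2Space Y] {A : Set B}
    (g : C(B, Y)) (hg : ∀ a ∈ A, ∀ b ∈ A, g a = g b) :
    ∃ h : C(Collapse A, Y), h.comp (mk A) = g := by
  have hlift : Continuous (Quot.lift (r := fun a b => a ∈ A ∧ b ∈ A) g
      fun a b hab => hg a hab.1 b hab.2) := continuous_quot_lift _ g.continuous
  exact ⟨⟨T2Quotient.lift hlift, T2Quotient.continuous_lift hlift⟩, rfl⟩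

/-- The operator `(f, h) ↦ E f + h ∘ q`, where `q` is the quotient map onto `Collapse A` and a pair
`(f, h)` is encoded as a function on the topological sum. -/
noncomputable def extendAddPullback (E : C(F, ℝ) →L[ℝ] C(B, ℝ)) (A : Set B) :
    C(F ⊕ Collapse A, ℝ) →L[ℝ] C(B, ℝ) :=
  E ∘L ContinuousMap.compCLM ℝ ℝ ⟨Sum.inl, continuous_inl⟩ +
    ContinuousMap.compCLM ℝ ℝ ((⟨Sum.inr, continuous_inr⟩ : C(_, F ⊕ Collapse A)).comp
      (Collapse.mk A))

variable {E : C(F, ℝ) →L[ℝ] C(B, ℝ)} {b₀ : B}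

theorem extendAddPullback_apply (A : Set B) (k : C(F ⊕ Collapse A, ℝ)) (b : B) :
    extendAddPullback E A k b =
      E (k.comp ⟨Sum.inl, continuous_inl⟩) b + k (Sum.inr (Collapse.mk A b)) :=
  rfl

theorem extendAddPullback_injective {ι : F → B} (hE : ∀ f x, E f (ι x) = f x)
    (hE₀ : ∀ f, E f b₀ = 0) :
    Function.Injective (extendAddPullback E (insert b₀ (range ι))) := by
  refine (injective_iff_map_eq_zero _).mpr fun k hk => ?_
  have hk' (b : B) := DFunLike.congr_fun hk b
  simp only [extendAddPullback_apply, ContinuousMap.zero_apply] at hk'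
  have hbase : k (Sum.inr (Collapse.mk _ b₀)) = 0 := by simpa only [hE₀, zero_add] using hk' b₀
  have hinl (x : F) : k (Sum.inl x) = 0 := by
    have hglue := Collapse.mk_eq_mk (mem_insert_of_mem b₀ (mem_range_self x))
      (mem_insert b₀ (range ι))
    simpa [hE, hglue, hbase] using hk' (ι x)
  have hrestrict : k.comp ⟨Sum.inl, continuous_inl⟩ = 0 := ContinuousMap.ext hinl
  ext (x | z)
  · exact hinl x
  · obtain ⟨b, rfl⟩ := Collapse.mk_surjective _ z
    simpa [hrestrict] using hk' b

theorem extendAddPullback_surjective {ι : C(F, B)} (hE : ∀ f x, E f (ι x) = f x)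
    (hE₀ : ∀ f, E f b₀ = 0) :
    Function.Surjective (extendAddPullback E (insert b₀ (range ι))) := by
  intro g
  let f : C(F, ℝ) := g.comp ι - ContinuousMap.const F (g b₀)
  have hconst : ∀ b ∈ insert b₀ (range ι), (g - E f) b = g b₀ := by
    rintro _ (rfl | ⟨x, rfl⟩)
    · simp [hE₀]
    · simp [hE, f]
  obtain ⟨h, hh⟩ := Collapse.exists_comp_mk_eq (g - E f) fun a ha b hb =>
    (hconst a ha).trans (hconst b hb).symm
  refine ⟨⟨Sum.elim f h, f.continuous.sumElim h.continuous⟩, ?_⟩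
  ext b
  change E f b + h (Collapse.mk _ b) = g b
  have hhb : h (Collapse.mk _ b) = g b - E f b := DFunLike.congr_fun hh b
  rw [hhb, add_sub_cancel]

theorem nonempty_continuousLinearEquiv_sum_collapse [CompactSpace F] [CompactSpace B]
    {ι : C(F, B)} (hE : ∀ f x, E f (ι x) = f x) (hE₀ : ∀ f, E f b₀ = 0) :
    Nonempty (C(B, ℝ) ≃L[ℝ] C(F ⊕ Collapse (insert b₀ (range ι)), ℝ)) :=
  ⟨(ContinuousLinearEquiv.ofBijective _
    (LinearMap.ker_eq_bot.mpr (extendAddPullback_injective hE hE₀))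
    (LinearMap.range_eq_top.mpr (extendAddPullback_surjective hE hE₀))).symm⟩

end Collapse

theorem locallyConnectedSpace_of_convex {E : Type*} [AddCommGroup E] [Module ℝ E]
    [TopologicalSpace E] [ContinuousAdd E] [ContinuousSMul ℝ E] [LocallyConvexSpace ℝ E]
    {s : Set E} (hs : Convex ℝ s) : LocallyConnectedSpace s := by
  rw [locallyConnectedSpace_iff_connected_subsets]
  intro x U hU
  obtain ⟨W, hW, hWU⟩ := mem_nhds_induced _ _ _ |>.mp hU
  obtain ⟨V, ⟨hV, hVconvex⟩, hVW⟩ :=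
    (LocallyConvexSpace.convex_basis (𝕜 := ℝ) x.1).mem_iff.mp hW
  refine ⟨(↑) ⁻¹' V, continuous_subtype_val.continuousAt.preimage_mem_nhds hV, ?_,
    (preimage_mono hVW).trans hWU⟩
  rw [← IsInducing.subtypeVal.isPreconnected_image, Subtype.image_preimage_coe]
  exact (hs.inter hVconvex).isPreconnected

section DualBall

variable (E : Type*) [NormedAddCommGroup E] [NormedSpace ℝ E]

/-- The closed unit ball of the dual of `E`, with the weak-* topology. -/
abbrev DualBall : Set (WeakDual ℝ E) :=
  WeakDual.toStrongDual ⁻¹' Metric.closedBall 0 1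

instance : CompactSpace (DualBall E) :=
  isCompact_iff_compactSpace.mp (WeakDual.isCompact_closedBall 0 1)

instance : LocallyConvexSpace ℝ (WeakDual ℝ E) :=
  inferInstanceAs (LocallyConvexSpace ℝ (WeakBilin (topDualPairing ℝ E)))

instance : LocallyConnectedSpace (DualBall E) :=
  locallyConnectedSpace_of_convex <|
    (convex_closedBall (0 : StrongDual ℝ E) 1).linear_preimage
      (WeakDual.toStrongDual (𝕜 := ℝ) (E := E)).toLinearMap

noncomputable instance : Zero (DualBall E) :=
  ⟨0, Metric.mem_closedBall_self (α := StrongDual ℝ E) zero_le_one⟩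

/-- The canonical map from a normed space into the continuous functions on its dual ball. -/
noncomputable def DualBall.evalCLM : E →L[ℝ] C(DualBall E, ℝ) :=
  LinearMap.mkContinuous
    { toFun x := ⟨fun φ => φ.1 x, (WeakDual.eval_continuous x).comp continuous_subtype_val⟩
      map_add' x y := ContinuousMap.ext fun φ => map_add φ.1 x y
      map_smul' c x := ContinuousMap.ext fun φ => map_smul φ.1 c x }
    1 fun x => (ContinuousMap.norm_le _ (by positivity)).mpr fun φ =>
      (WeakDual.toStrongDual φ.1).le_of_opNorm_le (mem_closedBall_zero_iff.mp φ.2) x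

/-- The embedding of a compact space `F` into the dual ball of `C(F)` by Dirac functionals. -/
noncomputable def DualBall.dirac (F : Type*) [TopologicalSpace F] [CompactSpace F] :
    C(F, DualBall C(F, ℝ)) where
  toFun x := ⟨WeakDual.toStrongDual.symm (ContinuousMap.evalCLM ℝ x),
    (mem_closedBall_zero_iff (E := StrongDual ℝ C(F, ℝ))).mpr <|
      ContinuousLinearMap.opNorm_le_bound _ zero_le_one fun f =>
        (f.norm_coe_le_norm x).trans_eq (one_mul _).symm⟩
  continuous_toFun :=
    (WeakDual.continuous_of_continuous_eval fun f => f.continuous).subtype_mk _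

end DualBall

theorem strictMono_setOf_mem_ultrafilter (α : Type*) :
    StrictMono fun s : Set α => {u : Ultrafilter α | s ∈ u} := by
  refine Monotone.strictMono_of_injective (fun s t hst u hu => mem_of_superset hu hst)
    fun s t hst => ?_
  ext a
  exact Set.ext_iff.mp hst (pure a)

theorem strictMono_setOf_rat_lt {R : Type*} [Field R] [LinearOrder R] [IsStrictOrderedRing R]
    [Archimedean R] : StrictMono fun r : R => {q : ℚ | (q : R) < r} := by
  intro r s hrs
  obtain ⟨q, hrq, hqs⟩ := exists_rat_btwn hrs
  refine ⟨fun p hp => lt_trans hp hrs, fun hsub => ?_⟩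
  exact (hsub hqs).not_gt hrq

/-- **Example 4.1.** The Bishop property (B) is not preserved under Banach space
isomorphisms of `C(K)`-spaces: there are compact Hausdorff spaces `K₁`, `K₂` with
`C(K₁)` and `C(K₂)` isomorphic as Banach spaces (linearly homeomorphic), such that
`K₁` has (B) and `K₂` does not. -/
theorem stmt18 :
    ∃ (K₁ K₂ : Type) (t₁ : TopologicalSpace K₁) (t₂ : TopologicalSpace K₂),
      letI := t₁; letI := t₂;
      ∃ (c₁ : CompactSpace K₁) (c₂ : CompactSpace K₂)
        (h₁ : T2Space K₁) (h₂ : T2Space K₂),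
        Nonempty (C(K₁, ℝ) ≃L[ℝ] C(K₂, ℝ)) ∧ HasBishop K₁ ∧ ¬ HasBishop K₂ := by
  let F := Ultrafilter ℚ
  let A : Set (DualBall C(F, ℝ)) := insert 0 (range (DualBall.dirac F))
  have hdirac (f : C(F, ℝ)) (x : F) : DualBall.evalCLM _ f (DualBall.dirac F x) = f x := rfl
  have hzero (f : C(F, ℝ)) : DualBall.evalCLM _ f 0 = 0 := rfl
  let U (r : ℝ) : Set (F ⊕ Collapse A) := Sum.inl '' {u | {q : ℚ | (q : ℝ) < r} ∈ u}
  have hU (r : ℝ) : IsClopen (U r) :=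
    ⟨IsClosedEmbedding.inl.isClosedMap _ (ultrafilter_isClosed_basic _),
      IsOpenEmbedding.inl.isOpenMap _ (ultrafilter_isOpen_basic _)⟩
  have hmono : StrictMono U :=
    Sum.inl_injective.image_strictMono.comp <|
      (strictMono_setOf_mem_ultrafilter ℚ).comp strictMono_setOf_rat_lt
  exact ⟨DualBall C(F, ℝ), F ⊕ Collapse A, inferInstance, inferInstance,
    inferInstance, inferInstance, inferInstance, inferInstance,
    nonempty_continuousLinearEquiv_sum_collapse hdirac hzero,
    hasBishop_of_locallyConnectedSpace _, not_hasBishop_of_strictMono_isClopen hU hmono⟩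
end
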